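/- Let N be a group and H a finite central subgroup of N such that N/H is abelian and N/H is finitely generated (or more generally, such that the subgroup generated by k-th powers together with H has finite index, where k = |H|). Then the center Z(N) has finite index in N. -/

import Mathlib

/-!
Since `⁅x, g⁆ * g = x * g * x⁻¹`, taking `n`-th powers gives `⁅x, g ^ n⁆ = ⁅x, g⁆ ^ n` as soon as
`⁅x, g⁆` commutes with `g`. When `N/H` is abelian, every commutator lies in the central subgroup
`H`, whose order `k` kills it, so all `k`-th powers are central.
-/

open scoped commutatorElement

theorem commutatorElement_pow_right_of_commute {G : Type*} [Group G] {x g : G}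
    (h : Commute ⁅x, g⁆ g) (n : ℕ) : ⁅x, g ^ n⁆ = ⁅x, g⁆ ^ n := by
  suffices ⁅x, g ^ n⁆ * g ^ n = ⁅x, g⁆ ^ n * g ^ n from mul_right_cancel this
  calc
    ⁅x, g ^ n⁆ * g ^ n = x * g ^ n * x⁻¹ := inv_mul_cancel_right _ _
    _ = (x * g * x⁻¹) ^ n := conj_pow.symm
    _ = (⁅x, g⁆ * g) ^ n := by rw [commutatorElement_def, inv_mul_cancel_right]
    _ = ⁅x, g⁆ ^ n * g ^ n := h.mul_pow n

theorem pow_mem_center_of_commutatorElement_pow_eq_one {G : Type*} [Group G] {g : G} {n : ℕ}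
    (hcomm : ∀ x : G, Commute ⁅x, g⁆ g) (hpow : ∀ x : G, ⁅x, g⁆ ^ n = 1) :
    g ^ n ∈ Subgroup.center G := by
  refine Subgroup.mem_center_iff.mpr fun x ↦ commutatorElement_eq_one_iff_mul_comm.mp ?_
  rw [commutatorElement_pow_right_of_commute (hcomm x), hpow x]

/-- The commutation hypothesis says that `N` is a 2-Engel group; groups of nilpotency class at most
two, such as central extensions of abelian groups, satisfy it. -/
theorem center_finiteIndex_general {N : Type*} [Group N] {H : Subgroup N}
    (hcent : H ≤ Subgroup.center N) {k : ℕ} (hcomm : ∀ x g : N, Commute ⁅x, g⁆ g)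
    (hpow : ∀ x g : N, ⁅x, g⁆ ^ k = 1)
    (hfin : (Subgroup.closure ({x : N | ∃ g : N, x = g ^ k} ∪ (H : Set N))).FiniteIndex) :
    (Subgroup.center N).FiniteIndex := by
  have hpow_center : {x : N | ∃ g : N, x = g ^ k} ⊆ Subgroup.center N := by
    rintro _ ⟨g, rfl⟩
    exact pow_mem_center_of_commutatorElement_pow_eq_one (hcomm · g) (hpow · g)
  exact Subgroup.finiteIndex_of_le
    ((Subgroup.closure_le _).mpr (Set.union_subset hpow_center hcent))

/-- If `H` is a finite central subgroup of order `k` with `N/H` abelian, and the subgroup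
generated by `k`-th powers together with `H` has finite index, then the center of `N`
has finite index. -/
theorem center_finiteIndex {N : Type*} [Group N] (H : Subgroup N) [H.Normal]
    (hcent : H ≤ Subgroup.center N) [Finite H] (k : ℕ) (hk : Nat.card H = k)
    (habel : ∀ x y : N ⧸ H, x * y = y * x)
    (hfin : (Subgroup.closure ({x : N | ∃ g : N, x = g ^ k} ∪ (H : Set N))).FiniteIndex) :
    (Subgroup.center N).FiniteIndex := by
  have hmem (x y : N) : ⁅x, y⁆ ∈ H :=
    (QuotientGroup.eq_one_iff _).mp (commutatorElement_eq_one_iff_mul_comm.mpr (habel x y))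
  exact center_finiteIndex_general hcent
    (fun x g ↦ (Subgroup.mem_center_iff.mp (hcent (hmem x g)) g).symm)
    (fun x g ↦ orderOf_dvd_iff_pow_eq_one.mp (hk ▸ H.orderOf_dvd_natCard (hmem x g))) hfin
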